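/- arXiv:alg-geom/9703037 — 2 statements merged into one kernel-verified Lean document; each statement's English description precedes it below -/
import Mathlib

section
/- With notation as in the standard deformation of a vertically graded ideal: let F = Σ_{α ≥ 0} F_α(x,y) t^α be a function in I_t ⊆ k[[t,x,y]], where I_t is the standard deformation (with parameter r) of the vertically graded ideal I = I₀ ⊕ I₁y ⊕ ⋯ ⊕ I_{m−1}y^{m−1} ⊕ (y^m). If y divides F_α for α = 0, r, 2r, …, pr, then F₀(x,y) lies in the ideal I₀y ⊕ I₁y² ⊕ ⋯ ⊕ I_{p−1}y^p ⊕ I_{p+1}y^{p+1} ⊕ ⋯ ⊕ I_{m−1}y^{m−1} ⊕ (y^m) of k[[x,y]]. -/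
/-!
STATEMENT 14.  Notation as in the standard deformation of a vertically graded
ideal: `k[[x]] = MvPowerSeries (Fin (n-1)) k`, a vertically graded ideal
`I = I₀ ⊕ I₁y ⊕ ⋯ ⊕ I_{m−1}y^{m−1} ⊕ (y^m)` is encoded by a monotone family
`I : ℕ → Ideal k[[x]]` with `I i = ⊤` for `i ≥ m`, and an element
`F = Σ_α F_α(x,y) t^α = Σ_{α,β} F_{α,β}(x) t^α y^β` of `k[[t,x,y]]` is encoded
by its coefficient family `F : ℕ → ℕ → k[[x]]`.

`y ∣ F_α` means `F_{α,0} = 0`.  The conclusion `F₀ ∈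
I₀y ⊕ I₁y² ⊕ ⋯ ⊕ I_{p−1}y^p ⊕ I_{p+1}y^{p+1} ⊕ ⋯ ⊕ I_{m−1}y^{m−1} ⊕ (y^m)`
says on coefficients: `F_{0,0} = 0`, `F_{0,β} ∈ I_{β−1}` for `1 ≤ β ≤ p`, and
`F_{0,β} ∈ I_β` for `β > p` (for `β ≥ m` this is no condition as `I_β = ⊤`).
-/

/-- `F ∈ I_t`, expressed on coefficients: there are `a i j ∈ I i` with
`F_{α,β} = Σ_{ν : rν ≤ α} (−1)^ν C(β+ν,ν) a_{β+ν, α−rν}` for all `α, β`. -/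
def MemStdDeformation {R : Type} [CommRing R] (I : ℕ → Ideal R) (r : ℕ)
    (F : ℕ → ℕ → R) : Prop :=
  ∃ a : ℕ → ℕ → R, (∀ i j, a i j ∈ I i) ∧
    ∀ α β : ℕ, F α β =
      ∑ ν ∈ Finset.range (α / r + 1),
        ((-1 : ℤ) ^ ν * ((β + ν).choose ν : ℤ)) • a (β + ν) (α - r * ν)

/-!
Write `F = ∑ᵢ aᵢ(t) (y - t^r)^i` with the coefficients of `aᵢ` in `Iᵢ`. The coefficient of
`t^(l r) y^β` only involves `a_β, …, a_{β+l}`, and the contribution of `a_{β+l}` is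
`± (β+l choose l)` times its constant term, which is the coefficient of `y^(β+l)` in `F₀`. For
`β = 0` the binomial is `1`, so the vanishing of this coefficient puts `F_{0,l}` in
`I₀ + ⋯ + I_{l-1} = I_{l-1}`.
-/

namespace MemStdDeformation

variable {R : Type} [CommRing R] {I : ℕ → Ideal R} {r : ℕ} {F : ℕ → ℕ → R}

theorem coeff_mem_of_lt (hF : MemStdDeformation I r F) {s : ℕ} (hs : s < r) (β : ℕ) :
    F s β ∈ I β := by
  obtain ⟨a, ha, hFa⟩ := hF
  have coeff_eq : F s β = a β s := by simp [hFa, Nat.div_eq_of_lt hs]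
  exact coeff_eq ▸ ha β s

theorem coeff_sub_choose_smul_mem (hmono : Monotone I) (hF : MemStdDeformation I r F)
    {s : ℕ} (hs : s < r) (l β : ℕ) :
    F (s + r * (l + 1)) β -
        ((-1 : ℤ) ^ (l + 1) * ((β + (l + 1)).choose (l + 1) : ℤ)) • F s (β + (l + 1)) ∈
      I (β + l) := by
  obtain ⟨a, ha, hFa⟩ := hF
  have coeff_eq : F s (β + (l + 1)) = a (β + (l + 1)) s := by simp [hFa, Nat.div_eq_of_lt hs]
  have quotient_eq : (s + r * (l + 1)) / r = l + 1 := by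
    rw [Nat.add_mul_div_left _ _ (Nat.zero_lt_of_lt hs), Nat.div_eq_of_lt hs, zero_add]
  rw [hFa (s + r * (l + 1)), quotient_eq, Finset.sum_range_succ, Nat.add_sub_cancel, coeff_eq,
    add_sub_cancel_right]
  refine Ideal.sum_mem _ fun ν hν ↦ zsmul_mem (hmono ?_ (ha (β + ν) _)) _
  exact Nat.add_le_add_left (Nat.le_of_lt_succ (Finset.mem_range.mp hν)) β

theorem coeff_mem_of_coeff_eq_zero (hmono : Monotone I) (hF : MemStdDeformation I r F)
    {s : ℕ} (hs : s < r) {l : ℕ} (hzero : F (s + r * (l + 1)) 0 = 0) :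
    F s (l + 1) ∈ I l := by
  refine (Submodule.smul_mem_iff' (I l) ((-1 : ℤˣ) ^ (l + 1))).mp ?_
  simpa [hzero, Units.smul_def] using hF.coeff_sub_choose_smul_mem hmono hs l 0

end MemStdDeformation

theorem statement_14_general {R : Type} [CommRing R] {I : ℕ → Ideal R} (hmono : Monotone I)
    {r : ℕ} (hr : 0 < r) {F : ℕ → ℕ → R} (hF : MemStdDeformation I r F) {p : ℕ}
    (hdiv : ∀ lam : ℕ, lam ≤ p → F (lam * r) 0 = 0) :
    F 0 0 = 0 ∧
    (∀ β : ℕ, 1 ≤ β → β ≤ p → F 0 β ∈ I (β - 1)) ∧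
    (∀ β : ℕ, p < β → F 0 β ∈ I β) := by
  refine ⟨by simpa using hdiv 0 p.zero_le, fun β one_le le_p ↦ ?_,
    fun β _ ↦ hF.coeff_mem_of_lt hr β⟩
  obtain ⟨l, rfl⟩ := Nat.exists_eq_add_of_le' one_le
  have coeff_zero : F (0 + r * (l + 1)) 0 = 0 := by
    rw [zero_add, mul_comm]
    exact hdiv (l + 1) le_p
  exact hF.coeff_mem_of_coeff_eq_zero hmono hr coeff_zero

theorem statement_14 (k : Type) [Field k] (n : ℕ) (m : ℕ)
    (I : ℕ → Ideal (MvPowerSeries (Fin (n - 1)) k))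
    (hmono : Monotone I) (htop : ∀ i, m ≤ i → I i = ⊤)
    (r : ℕ) (hr : 0 < r)
    (F : ℕ → ℕ → MvPowerSeries (Fin (n - 1)) k)
    (hF : MemStdDeformation I r F)
    (p : ℕ)
    (hdiv : ∀ lam : ℕ, lam ≤ p → F (lam * r) 0 = 0) :
    F 0 0 = 0 ∧
    (∀ β : ℕ, 1 ≤ β → β ≤ p → F 0 β ∈ I (β - 1)) ∧
    (∀ β : ℕ, p < β → F 0 β ∈ I β) :=
  statement_14_general hmono hr hF hdiv
end

section
/- For i = 1, …, ℓ let B⁽ⁱ⁾ = k[[xᵢ, yᵢ]] be a formal power series algebra in n variables (xᵢ an (n−1)-tuple), let I⁽ⁱ⁾ = I₀⁽ⁱ⁾ ⊕ I₁⁽ⁱ⁾yᵢ ⊕ ⋯ ⊕ I_{mᵢ−1}⁽ⁱ⁾yᵢ^{mᵢ−1} ⊕ (yᵢ^{mᵢ}) be a vertically graded ideal, let B = B⁽¹⁾ × ⋯ × B⁽ℓ⁾, I = I⁽¹⁾ × ⋯ × I⁽ℓ⁾, and let I_𝐭 ⊆ B[[t₁,…,t_ℓ]] be the product of the deformed ideals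 I⁽ⁱ⁾_𝐭 = I₀⁽ⁱ⁾[[𝐭]] ⊕ I₁⁽ⁱ⁾[[𝐭]](yᵢ−tᵢ) ⊕ ⋯ ⊕ I_{mᵢ−1}⁽ⁱ⁾[[𝐭]](yᵢ−tᵢ)^{mᵢ−1} ⊕ ((yᵢ−tᵢ)^{mᵢ}). Let y = (y₁,…,y_ℓ) ∈ B and for a k-linear subspace V ⊆ B set V_{res(y)} = { v ∈ B : vy ∈ V }. Suppose there exist nonnegative integers p₁, …, p_ℓ such that: (1) the canonical map V/(V ∩ (y)) → k[[x₁]]/I⁽¹⁾_{p₁} × ⋯ × k[[x_ℓ]]/I⁽ℓ⁾_{p_ℓ} is injective; and (2) the canonical map V_{res(y)} → B/J is injective, where J = J⁽¹⁾ × ⋯ × J⁽ℓ⁾ with J⁽ⁱ⁾ = I₀⁽ⁱ⁾ ⊕ I₁⁽ⁱ⁾yᵢ ⊕ ⋯ ⊕ I_{pᵢ−1}⁽ⁱ⁾yᵢ^{pᵢ−1} ⊕ I_{pᵢ+1}⁽ⁱ⁾yᵢ^{pᵢ} ⊕ ⋯ ⊕ I_{mᵢ−1}⁽ⁱ⁾yᵢ^{mᵢ−2}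 ⊕ (yᵢ^{mᵢ−1}). Then the canonical map φ_𝐭 : V ⊗ k[[t₁,…,t_ℓ]] → B[[𝐭]]/I_𝐭 is generically injective. -/
/-!
STATEMENT 15 (the formal lemma).

For `i = 1,…,ℓ`, `B⁽ⁱ⁾ = k[[xᵢ,yᵢ]]` is a formal power series algebra in `n`
variables; we realise it as `PowerSeries R` (the variable being `yᵢ`) with
`R = k[[x]] = MvPowerSeries (Fin (n-1)) k`, so that
`B = B⁽¹⁾ × ⋯ × B⁽ℓ⁾ = Fin ℓ → PowerSeries R`.

The vertically graded ideal
`I⁽ⁱ⁾ = I₀⁽ⁱ⁾ ⊕ I₁⁽ⁱ⁾yᵢ ⊕ ⋯ ⊕ I_{mᵢ−1}⁽ⁱ⁾yᵢ^{mᵢ−1} ⊕ (yᵢ^{mᵢ})` is encoded by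
a monotone family `Ii i : ℕ → Ideal R` with `Ii i q = ⊤` for `q ≥ m i`; then
`f ∈ I⁽ⁱ⁾ ↔ ∀ β, coeff β f ∈ Ii i β`.

`y = (y₁,…,y_ℓ)` is the element with components `PowerSeries.X`; for a
`k`-subspace `V ⊆ B`, `V_{res(y)} = {v | y·v ∈ V}`, and `v ∈ (y)` iff each
component of `v` has vanishing constant term.

Hypothesis (1) — injectivity of `V/(V∩(y)) → Π R/I⁽ⁱ⁾_{pᵢ}` (the map sends
`v` to its constant `y`-coefficients): if all constant `y`-coefficients of
`v ∈ V` lie in the `I⁽ⁱ⁾_{pᵢ}`, then they all vanish.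

Hypothesis (2) — injectivity of `V_{res(y)} → B/J`, where the coefficient of
`yᵢ^β` in `J⁽ⁱ⁾` is `I⁽ⁱ⁾_β` for `β < pᵢ` and `I⁽ⁱ⁾_{β+1}` for `β ≥ pᵢ`
(which is `⊤` for `β ≥ mᵢ − 1`).

Conclusion — generic injectivity of `φ_𝐭 : V ⊗ k[[t₁,…,t_ℓ]] → B[[𝐭]]/I_𝐭`.
An element of `V ⊗ k[[𝐭]]` is a finite sum `Σ_j s_j ⊗ w_j` (`s_j ∈ k[[𝐭]]`,
`w_j ∈ V`); its image in `B[[𝐭]]` has `i`-th component with coefficient of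
`𝐭^μ yᵢ^β` equal to `Σ_j (coeff_μ s_j) • (coeff_β (w_j)ᵢ)`.  Membership in
`I_𝐭` (the product of the deformed ideals
`I⁽ⁱ⁾_𝐭 = ⊕_q I_q⁽ⁱ⁾[[𝐭]](yᵢ−tᵢ)^q ⊕ ((yᵢ−tᵢ)^{mᵢ})`) is expressed, as in the
one-variable case, by the finite coefficient identities below (deformation
parameter `r = 1` in the variable `tᵢ` for the `i`-th factor).  Since
`V ⊗ k[[𝐭]] → B[[𝐭]]` is injective and `V ⊗ k[[𝐭]]` is a torsion-free
`k[[𝐭]]`-module, generic injectivity of `φ_𝐭` means exactly: any element of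
`V ⊗ k[[𝐭]]` whose image lies in `I_𝐭` is zero, i.e. all coefficients
`Σ_j (coeff_μ s_j) • w_j ∈ B` vanish.
-/

/-!
Give `t_i` the weight `r_i = M / (p_i + 1)`, and show by strong induction on the weight of `μ`
that every coefficient `F_μ ∈ V` of a series `F = ∑ 𝐭^μ F_μ ∈ I_𝐭` vanishes. Write the `i`-th
component of `F` as `∑_q a_q (y_i - t_i)^q` with `a_q ∈ I_q⁽ⁱ⁾[[𝐭]]`. If `F` has no term of weight
less than `W`, then neither has any `a_q`, so for `μ` of weight `W` the coefficient of `y_i^β` in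
`F_μ` is the coefficient of `𝐭^μ` in `a_β`.

In weight less than `W + M` the constant coefficients involve only `a_0, …, a_{p_i}`, hence lie in
`I_{p_i}⁽ⁱ⁾` and vanish by (1). In particular `F_μ = y v`. Moreover, for `β < p_i`, the vanishing
of the constant coefficient at `𝐭^μ t_i^{β+1}` expresses the coefficient of `𝐭^μ` in `a_{β+1}`
through `a_0, …, a_β`, so that it lies in `I_β⁽ⁱ⁾`. This says `v ∈ J`, and (2) gives `v = 0`.
-/

section

open PowerSeries Finsupp

variable {ι R : Type*}

lemma weight_sub_single_add (r : ι → ℕ) {μ : ι →₀ ℕ} {i : ι} {ν : ℕ} (hν : ν ≤ μ i) :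
    weight r (μ - single i ν) + ν * r i = weight r μ := by
  rw [← smul_eq_mul, ← weight_single, ← map_add, tsub_add_cancel_of_le (single_le_iff.mpr hν)]

lemma exists_pos_forall_mul_eq [Finite ι] {d : ι → ℕ} (hd : ∀ i, 0 < d i) :
    ∃ M : ℕ, 0 < M ∧ ∃ r : ι → ℕ, ∀ i, d i * r i = M := by
  have := Fintype.ofFinite ι
  choose r hr using fun i => Finset.dvd_prod_of_mem d (Finset.mem_univ i)
  exact ⟨∏ i, d i, Finset.prod_pos fun i _ => hd i, r, fun i => (hr i).symm⟩

variable [Ring R]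

/-- The identity `∑_μ f_μ 𝐭^μ = ∑_q a_q (y - t_i)^q` in `R[[y]][[𝐭]]`, where `a_q ∈ R[[𝐭]]` has
coefficients `a q μ`, written out as an equality of the coefficients of `𝐭^μ y^β`: the
power `(y - t_i)^(β+ν)` contributes `(-1)^ν * (β+ν choose ν)` times `y^β t_i^ν`. -/
def IsShiftedExpansion (i : ι) (a : ℕ → (ι →₀ ℕ) → R) (f : (ι →₀ ℕ) → R⟦X⟧) : Prop :=
  ∀ μ β, coeff β (f μ) = ∑ ν ∈ Finset.range (μ i + 1),
    ((-1 : ℤ) ^ ν * ((β + ν).choose ν : ℤ)) • a (β + ν) (μ - single i ν)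

namespace IsShiftedExpansion

variable {i : ι} {a : ℕ → (ι →₀ ℕ) → R} {f : (ι →₀ ℕ) → R⟦X⟧} {r : ι → ℕ}

lemma constantCoeff_eq (h : IsShiftedExpansion i a f) (μ : ι →₀ ℕ) :
    constantCoeff (f μ) =
      ∑ ν ∈ Finset.range (μ i + 1), (-1 : ℤ) ^ ν • a ν (μ - single i ν) := by
  simpa using h μ 0

lemma coeff_eq_of_forall_weight_lt (h : IsShiftedExpansion i a f) (hr : 0 < r i) {μ : ι →₀ ℕ}
    (ha : ∀ μ', weight r μ' < weight r μ → ∀ q, a q μ' = 0) (β : ℕ) :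
    coeff β (f μ) = a β μ := by
  rw [h, Finset.sum_eq_single_of_mem 0 (by simp)]
  · simp
  · intro ν hν hν0
    have hwt := weight_sub_single_add r (Finset.mem_range_succ_iff.mp hν)
    have hpos : 0 < ν * r i := by positivity
    rw [ha _ (by omega), smul_zero]

lemma eq_zero_of_weight_lt (h : IsShiftedExpansion i a f) (hr : 0 < r i) {W : ℕ}
    (hf : ∀ μ, weight r μ < W → f μ = 0) (μ : ι →₀ ℕ) (hμ : weight r μ < W) (q : ℕ) :
    a q μ = 0 := by
  induction hU : weight r μ using Nat.strong_induction_on generalizing μ q with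
  | _ U ih =>
    rw [← h.coeff_eq_of_forall_weight_lt hr
      (fun μ' hμ' q' => ih _ (hU ▸ hμ') μ' (hμ'.trans hμ) q' rfl), hf μ hμ, map_zero]

variable {I : ℕ → Ideal R}

lemma constantCoeff_mem (h : IsShiftedExpansion i a f) (hI : Monotone I)
    (haI : ∀ q μ, a q μ ∈ I q) {W p : ℕ} (ha : ∀ μ, weight r μ < W → ∀ q, a q μ = 0)
    {μ : ι →₀ ℕ} (hμ : weight r μ < W + (p + 1) * r i) : constantCoeff (f μ) ∈ I p := by
  rw [h.constantCoeff_eq]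
  refine sum_mem fun ν hν => zsmul_mem ?_ _
  have hwt := weight_sub_single_add r (Finset.mem_range_succ_iff.mp hν)
  obtain hlt | hge := lt_or_ge (weight r (μ - single i ν)) W
  · rw [ha _ hlt]
    exact zero_mem _
  · have hνp : ν < p + 1 := lt_of_mul_lt_mul_right (by omega) (Nat.zero_le (r i))
    exact hI (Nat.le_of_lt_succ hνp) (haI ν _)

lemma mem_of_constantCoeff_eq_zero (h : IsShiftedExpansion i a f) (hI : Monotone I)
    (haI : ∀ q μ, a q μ ∈ I q) (hr : 0 < r i) {μ : ι →₀ ℕ}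
    (ha : ∀ μ', weight r μ' < weight r μ → ∀ q, a q μ' = 0) {β : ℕ}
    (h0 : constantCoeff (f (μ + single i (β + 1))) = 0) : a (β + 1) μ ∈ I β := by
  rw [h.constantCoeff_eq, ← Finset.add_sum_erase _ _ (a := β + 1) (by simp),
    add_tsub_cancel_right] at h0
  have hmem : (-1 : ℤ) ^ (β + 1) • a (β + 1) μ ∈ I β := by
    rw [eq_neg_of_add_eq_zero_left h0]
    refine neg_mem (sum_mem fun ν hν => zsmul_mem ?_ _)
    obtain ⟨hne, hν⟩ := Finset.mem_erase.mp hν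
    obtain hle | hgt := le_or_gt ν β
    · exact hI hle (haI ν _)
    · have hwt := weight_sub_single_add r (Finset.mem_range_succ_iff.mp hν)
      rw [map_add, weight_single, smul_eq_mul] at hwt
      have hlt : (β + 1) * r i < ν * r i := Nat.mul_lt_mul_of_pos_right (by omega) hr
      rw [ha _ (by omega)]
      exact zero_mem _
  rcases neg_one_pow_eq_or ℤ (β + 1) with hsign | hsign <;> simpa [hsign] using hmem

end IsShiftedExpansion

section Deformation

variable {I : ι → ℕ → Ideal R} {V : Set (ι → R⟦X⟧)} {p : ι → ℕ} {F : (ι →₀ ℕ) → ι → R⟦X⟧}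
  {a : ι → ℕ → (ι →₀ ℕ) → R} {r : ι → ℕ} {M : ℕ}

lemma constantCoeff_eq_zero_of_weight_lt (hI : ∀ i, Monotone (I i))
    (hV : ∀ v ∈ V, (∀ i, constantCoeff (v i) ∈ I i (p i)) → ∀ i, constantCoeff (v i) = 0)
    (hFV : ∀ μ, F μ ∈ V) (haI : ∀ i q μ, a i q μ ∈ I i q)
    (hexp : ∀ i, IsShiftedExpansion i (a i) fun μ => F μ i) (hr : ∀ i, (p i + 1) * r i = M)
    {W : ℕ} (ha : ∀ i μ, weight r μ < W → ∀ q, a i q μ = 0)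
    {μ : ι →₀ ℕ} (hμ : weight r μ < W + M) (i : ι) : constantCoeff (F μ i) = 0 :=
  hV (F μ) (hFV μ) (fun i => (hexp i).constantCoeff_mem (hI i) (haI i) (ha i) (by rwa [hr i])) i

lemma eq_zero_of_forall_weight_lt (hI : ∀ i, Monotone (I i))
    (hV : ∀ v ∈ V, (∀ i, constantCoeff (v i) ∈ I i (p i)) → ∀ i, constantCoeff (v i) = 0)
    (hres : ∀ v : ι → R⟦X⟧, (fun i => X * v i) ∈ V →
      (∀ i β, coeff β (v i) ∈ if β < p i then I i β else I i (β + 1)) → v = 0)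
    (hFV : ∀ μ, F μ ∈ V) (haI : ∀ i q μ, a i q μ ∈ I i q)
    (hexp : ∀ i, IsShiftedExpansion i (a i) fun μ => F μ i) (hM : 0 < M)
    (hr : ∀ i, (p i + 1) * r i = M) {μ : ι →₀ ℕ}
    (hF : ∀ μ', weight r μ' < weight r μ → F μ' = 0) : F μ = 0 := by
  have hrpos (i : ι) : 0 < r i := Nat.pos_of_mul_pos_left (hM.trans_eq (hr i).symm)
  have ha (i : ι) : ∀ μ', weight r μ' < weight r μ → ∀ q, a i q μ' = 0 :=
    (hexp i).eq_zero_of_weight_lt (hrpos i) fun μ' hμ' => congrFun (hF μ' hμ') i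
  have hconst {μ' : ι →₀ ℕ} (hμ' : weight r μ' < weight r μ + M) (i : ι) :
      constantCoeff (F μ' i) = 0 :=
    constantCoeff_eq_zero_of_weight_lt hI hV hFV haI hexp hr ha hμ' i
  choose v hv using fun i => X_dvd_iff.mpr (hconst (Nat.lt_add_of_pos_right hM) i)
  have hFv : F μ = fun i => X * v i := funext hv
  have hcoeff (i : ι) (β : ℕ) : coeff β (v i) = a i (β + 1) μ := by
    rw [← (hexp i).coeff_eq_of_forall_weight_lt (hrpos i) (ha i), hv, coeff_succ_X_mul]
  have hv0 : v = 0 := by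
    refine hres v (hFv ▸ hFV μ) fun i β => ?_
    rw [hcoeff]
    split_ifs with hβ
    · refine (hexp i).mem_of_constantCoeff_eq_zero (hI i) (haI i) (hrpos i) (ha i) (hconst ?_ i)
      rw [map_add, weight_single, smul_eq_mul, ← hr i]
      gcongr
      exact hrpos i
    · exact haI i _ μ
  rw [hFv, hv0]
  exact funext fun _ => mul_zero X

/-- Here `F` ranges over `V[[𝐭]]`, which contains the image of `V ⊗ k[[𝐭]]`. -/
theorem statement_15_general [Finite ι] (hI : ∀ i, Monotone (I i))
    (hV : ∀ v ∈ V, (∀ i, constantCoeff (v i) ∈ I i (p i)) → ∀ i, constantCoeff (v i) = 0)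
    (hres : ∀ v : ι → R⟦X⟧, (fun i => X * v i) ∈ V →
      (∀ i β, coeff β (v i) ∈ if β < p i then I i β else I i (β + 1)) → v = 0)
    (hFV : ∀ μ, F μ ∈ V)
    (hF : ∀ i, ∃ a : ℕ → (ι →₀ ℕ) → R,
      (∀ q μ, a q μ ∈ I i q) ∧ IsShiftedExpansion i a fun μ => F μ i)
    (μ : ι →₀ ℕ) : F μ = 0 := by
  choose a haI hexp using hF
  obtain ⟨M, hM, r, hr⟩ := exists_pos_forall_mul_eq fun i => Nat.succ_pos (p i)
  induction hW : weight r μ using Nat.strong_induction_on generalizing μ with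
  | _ W ih =>
    exact eq_zero_of_forall_weight_lt hI hV hres hFV haI hexp hM hr
      fun μ' hμ' => ih _ (hW ▸ hμ') μ' rfl

end Deformation

end

theorem statement_15 (k : Type) [Field k] (n ℓ : ℕ)
    (m : Fin ℓ → ℕ)
    (Ii : Fin ℓ → ℕ → Ideal (MvPowerSeries (Fin (n - 1)) k))
    (hmono : ∀ i, Monotone (Ii i))
    (htop : ∀ i q, m i ≤ q → Ii i q = ⊤)
    (V : Submodule k (Fin ℓ → PowerSeries (MvPowerSeries (Fin (n - 1)) k)))
    (p : Fin ℓ → ℕ)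
    -- (1) injectivity of `V/(V ∩ (y)) → k[[x₁]]/I⁽¹⁾_{p₁} × ⋯ × k[[x_ℓ]]/I⁽ℓ⁾_{p_ℓ}`
    (hyp1 : ∀ v ∈ V,
      (∀ i, PowerSeries.constantCoeff (v i) ∈ Ii i (p i)) →
      ∀ i, PowerSeries.constantCoeff (v i) = 0)
    -- (2) injectivity of `V_{res(y)} → B/J`
    (hyp2 : ∀ v : Fin ℓ → PowerSeries (MvPowerSeries (Fin (n - 1)) k),
      (fun i => PowerSeries.X * v i) ∈ V →
      (∀ (i : Fin ℓ) (β : ℕ),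
        PowerSeries.coeff β (v i) ∈
          (if β < p i then Ii i β else Ii i (β + 1))) →
      v = 0) :
    -- generic injectivity of `φ_𝐭 : V ⊗ k[[t₁,…,t_ℓ]] → B[[𝐭]]/I_𝐭`
    ∀ (N : ℕ) (w : Fin N → (Fin ℓ → PowerSeries (MvPowerSeries (Fin (n - 1)) k)))
      (hw : ∀ j, w j ∈ V) (s : Fin N → MvPowerSeries (Fin ℓ) k),
      -- the image of `Σ_j s_j ⊗ w_j` lies in `I_𝐭` :
      (∀ i : Fin ℓ, ∃ a : ℕ → (Fin ℓ →₀ ℕ) → MvPowerSeries (Fin (n - 1)) k,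
        (∀ q μ, a q μ ∈ Ii i q) ∧
        ∀ (μ : Fin ℓ →₀ ℕ) (β : ℕ),
          (∑ j, MvPowerSeries.coeff (R := k) μ (s j) • PowerSeries.coeff β (w j i)) =
            ∑ ν ∈ Finset.range (μ i + 1),
              ((-1 : ℤ) ^ ν * ((β + ν).choose ν : ℤ)) •
                a (β + ν) (μ - Finsupp.single i ν)) →
      -- then `Σ_j s_j ⊗ w_j = 0` :
      ∀ μ : Fin ℓ →₀ ℕ, (∑ j, MvPowerSeries.coeff (R := k) μ (s j) • w j) = 0 := by
  refine fun N w hw s hmem => statement_15_general (V := V) hmono hyp1 hyp2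
    (fun μ => V.sum_mem fun j _ => V.smul_mem _ (hw j))
    fun i => (hmem i).imp fun a ⟨haI, hcoeff⟩ => ⟨haI, fun μ β => ?_⟩
  simp only [← hcoeff μ β, Finset.sum_apply, Pi.smul_apply, map_sum, PowerSeries.coeff_smul]
end
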